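/- Let f ∈ BMO(𝓗^{n-1}). Then f ∈ VMO(𝓗^{n-1}) if and only if f satisfies the following three conditions: (i) lim_{a→0} sup_{B: r_B = a} M(f;B) = 0; (ii) lim_{a→∞} sup_{B: r_B = a} M(f;B) = 0; (iii) lim_{r→∞} sup_{B ⊂ 𝓗^{n-1}∖B(0,r)} M(f;B) = 0, where r_B denotes the radius of the ball B and M(f;B) = |B|^{-1}∫_B |f − f_B|. -/

import Mathlib

/-! Write `M(f;B)` for the mean oscillation `oscB`.

Necessity is a perturbation argument: `M(f;B) ≤ M(φ;B) + ‖f - φ‖`, and a smooth compactly supported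
`φ` satisfies all three conditions, since it is uniformly continuous for `rho` (`exists_unif`),
integrable, and zero far from the origin (`necessity`).

For sufficiency, fix a small `e`; a BMO approximation of `f` by a test function is built in four
steps (`sufficiency`).

* By (i), averaging `f` against a continuous tent kernel at a small scale gives a continuous `f₁`
  with `‖f - f₁‖` at most a multiple of `e` (`exists_continuous_approx`). On small balls both
  functions oscillate little; on large balls Tonelli's theorem bounds the mean of `|f - f₁|` by its
  means over small balls (`avg_le_of_small`).
* By (ii) and (iii), every ball `B` with `M(f;B) ≥ e` lies in one fixed ball `B₁` about the origin, on
  which `f₁` is bounded by some `N`. Let `f₂` be the truncation of `f₁` at `±N`. Then `f₁ - f₂`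
  vanishes on `B₁`, and on a ball not inside `B₁` its oscillation is at most twice the small
  oscillation of `f₁`, because `f₁ - f₂` is a 1-Lipschitz function of `f₁`.
* There is a compactly supported continuous `χ` with values in `[0, 1]`, equal to `1` on `B₁`, and
  with mean oscillation at most `e / N` on every ball (`exists_cutoff`): clamp a linear function of
  `log ‖x‖`, which is in BMO by a layer cake computation (`avg_logn_zero`, `avg_logn_le`). Put
  `f₃ = χ f₂`. The difference `(1 - χ) f₂` vanishes on `B₁`, and on a ball not inside `B₁` it
  oscillates by at most `2 (M(f₂;B) + N M(χ;B))` (`oscB_cutoff_mul`).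
* The compactly supported continuous `f₃` is a uniform limit of smooth functions supported inside
  its support.

Volumes of balls scale like `r ^ (4(n-1) + 6)` by left invariance of Lebesgue measure and dilations
(`vol_ball`), and only a quasi-triangle inequality for `rho` is needed (`rho_triangle`). -/

open MeasureTheory Filter Topology ENNReal NNReal
noncomputable section

namespace QHeis

abbrev G (n : ℕ) := (Fin 3 → ℝ) × (Fin (4*(n-1)) → ℝ)

def bmat : Fin 3 → Fin 4 → Fin 4 → ℝ :=
  ![![![0,1,0,0], ![-1,0,0,0], ![0,0,0,-1], ![0,0,1,0]],
    ![![0,0,1,0], ![0,0,0,1], ![-1,0,0,0], ![0,-1,0,0]],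
    ![![0,0,0,1], ![0,0,-1,0], ![0,1,0,0], ![-1,0,0,0]]]

def idx {n : ℕ} (l : Fin (n-1)) (k : Fin 4) : Fin (4*(n-1)) :=
  ⟨4 * l.1 + k.1, by have h1 := l.2; have h2 := k.2; omega⟩

def mul {n : ℕ} (a b : G n) : G n :=
  (fun α => a.1 α + b.1 α +
      2 * ∑ l : Fin (n-1), ∑ k : Fin 4, ∑ j : Fin 4,
        bmat α k j * a.2 (idx l k) * b.2 (idx l j),
    a.2 + b.2)

def inv {n : ℕ} (a : G n) : G n := (-a.1, -a.2)

def hnorm {n : ℕ} (g : G n) : ℝ :=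
  ((∑ i, (g.2 i)^2)^2 + ∑ α, (g.1 α)^2) ^ ((4:ℝ)⁻¹)

def rho {n : ℕ} (h g : G n) : ℝ := hnorm (mul (inv g) h)

def ball {n : ℕ} (g : G n) (r : ℝ) : Set (G n) := {h | rho h g < r}

def dil {n : ℕ} (r : ℝ) (g : G n) : G n := (fun α => r^2 * g.1 α, fun i => r * g.2 i)

def avg {n : ℕ} (B : Set (G n)) (f : G n → ℝ) : ℝ := (volume B).toReal⁻¹ * ∫ x in B, f x

def oscB {n : ℕ} (f : G n → ℝ) (g : G n) (r : ℝ) : ℝ :=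
  avg (ball g r) (fun x => |f x - avg (ball g r) f|)

def IsLocInt {n : ℕ} (f : G n → ℝ) : Prop :=
  ∀ (g : G n) (r : ℝ), 0 < r → IntegrableOn f (ball g r)

def InBMO {n : ℕ} (b : G n → ℝ) : Prop :=
  IsLocInt b ∧ ∃ C : ℝ, ∀ (g : G n) (r : ℝ), 0 < r → oscB b g r ≤ C

def bmoNorm {n : ℕ} (b : G n → ℝ) : ℝ :=
  sInf {C : ℝ | 0 ≤ C ∧ ∀ (g : G n) (r : ℝ), 0 < r → oscB b g r ≤ C}

def InVMO {n : ℕ} (b : G n → ℝ) : Prop :=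
  InBMO b ∧ ∀ ε : ℝ, 0 < ε → ∃ φ : G n → ℝ, ContDiff ℝ (⊤ : ℕ∞) φ ∧ HasCompactSupport φ ∧
    InBMO (fun x => b x - φ x) ∧ bmoNorm (fun x => b x - φ x) < ε

def wInt {n : ℕ} (w : G n → ℝ) (E : Set (G n)) : ℝ≥0∞ := ∫⁻ x in E, ENNReal.ofReal (w x)

def IsApGt1 {n : ℕ} (p : ℝ) (w : G n → ℝ) : Prop :=
  ∃ C : ℝ, ∀ (g : G n) (r : ℝ), 0 < r →
    (wInt w (ball g r) / volume (ball g r)) *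
      ((∫⁻ x in ball g r, (ENNReal.ofReal (w x)) ^ (-(1/(p-1)))) / volume (ball g r)) ^ (p-1)
      ≤ ENNReal.ofReal C

def IsA1 {n : ℕ} (w : G n → ℝ) : Prop :=
  ∃ C : ℝ, ∀ (g : G n) (r : ℝ), 0 < r →
    wInt w (ball g r) / volume (ball g r)
      ≤ ENNReal.ofReal C * essInf (fun x => ENNReal.ofReal (w x)) (volume.restrict (ball g r))

def IsAp {n : ℕ} (p : ℝ) (w : G n → ℝ) : Prop :=
  Measurable w ∧ (∀ x, 0 ≤ w x) ∧ (∀ (g : G n) (r : ℝ), 0 < r → wInt w (ball g r) < ⊤) ∧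
    ((p = 1 ∧ IsA1 w) ∨ (1 < p ∧ IsApGt1 p w))

def morreyNormE {n : ℕ} (p κ : ℝ) (w : G n → ℝ) (F : G n → ℝ≥0∞) : ℝ≥0∞ :=
  ⨆ (g : G n) (r : ℝ) (_ : 0 < r),
    ((∫⁻ x in ball g r, (F x) ^ p * ENNReal.ofReal (w x)) / (wInt w (ball g r)) ^ κ) ^ (1/p)

def morreyNorm {n : ℕ} (p κ : ℝ) (w f : G n → ℝ) : ℝ≥0∞ :=
  morreyNormE p κ w (fun x => ENNReal.ofReal |f x|)

def MemMorrey {n : ℕ} (p κ : ℝ) (w f : G n → ℝ) : Prop :=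
  Measurable f ∧ morreyNorm p κ w f < ⊤

def lpwNorm {n : ℕ} (p : ℝ) (w f : G n → ℝ) : ℝ≥0∞ :=
  (∫⁻ g, (ENNReal.ofReal |f g|) ^ p * ENNReal.ofReal (w g)) ^ (1/p)

def lpwNormQ {n : ℕ} (p : ℝ) (w : G n → ℝ) (f : G n → Quaternion ℝ) : ℝ≥0∞ :=
  (∫⁻ g, (ENNReal.ofReal ‖f g‖) ^ p * ENNReal.ofReal (w g)) ^ (1/p)

def dre (F : Quaternion ℝ → Quaternion ℝ) (σ : Quaternion ℝ) : Quaternion ℝ :=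
  deriv (fun s : ℝ => F (σ + (s : Quaternion ℝ))) 0

def sker (m : ℕ) (c : ℝ) (σ : Quaternion ℝ) : Quaternion ℝ :=
  c • (dre^[m] (fun τ => ((Quaternion.normSq τ) ^ 2)⁻¹ • star τ)) σ

def toQ {n : ℕ} (g : G n) : Quaternion ℝ := ⟨∑ i, (g.2 i)^2, g.1 0, g.1 1, g.1 2⟩

def Kker {n : ℕ} (c : ℝ) (g : G n) : Quaternion ℝ := sker (2*(n-1)) c (toQ g)

def Kker2 {n : ℕ} (c : ℝ) (g h : G n) : Quaternion ℝ := Kker c (mul (inv h) g)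

def commTendsto {n : ℕ} (c : ℝ) (b f : G n → ℝ) (g : G n) (L : Quaternion ℝ) : Prop :=
  Tendsto (fun ε : ℝ => ∫ h in {h : G n | ε < rho g h}, ((b g - b h) * f h) • Kker2 c g h)
    (nhdsWithin 0 (Set.Ioi 0)) (nhds L)

def commFun {n : ℕ} (c : ℝ) (b f : G n → ℝ) (g : G n) : Quaternion ℝ :=
  limUnder (nhdsWithin (0:ℝ) (Set.Ioi 0))
    (fun ε : ℝ => ∫ h in {h : G n | ε < rho g h}, ((b g - b h) * f h) • Kker2 c g h)

def eT {n : ℕ} (α : Fin 3) : G n := (Pi.single α 1, 0)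
def eY {n : ℕ} (i : Fin (4*(n-1))) : G n := (0, Pi.single i 1)

def pderiv {n : ℕ} (v : G n) (f : G n → ℝ) (g : G n) : ℝ :=
  deriv (fun s : ℝ => f (g + s • v)) 0

def Y {n : ℕ} (l : Fin (n-1)) (j : Fin 4) (f : G n → ℝ) (g : G n) : ℝ :=
  pderiv (eY (idx l j)) f g +
    2 * ∑ α : Fin 3, (∑ k : Fin 4, bmat α k j * g.2 (idx l k)) * pderiv (eT α) f g

def gradHsup {n : ℕ} (b : G n → ℝ) : ℝ :=
  sSup {a : ℝ | ∃ (g : G n) (l : Fin (n-1)) (j : Fin 4), a = |Y l j b g|}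

def maxFunE {n : ℕ} (f : G n → ℝ) (g : G n) : ℝ≥0∞ :=
  ⨆ (g0 : G n) (r : ℝ) (_ : 0 < r) (_ : g ∈ ball g0 r),
    (∫⁻ x in ball g0 r, ENNReal.ofReal |f x|) / volume (ball g0 r)

def Ceta {n : ℕ} (c : ℝ) (φ : ℝ → ℝ) (η : ℝ) (f : G n → ℝ) (g : G n) : Quaternion ℝ :=
  ∫ h, (φ (rho g h / η) * f h) • Kker2 c g h

def commEta {n : ℕ} (c : ℝ) (φ : ℝ → ℝ) (η : ℝ) (b f : G n → ℝ) (g : G n) : Quaternion ℝ :=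
  ∫ h, ((b g - b h) * (φ (rho g h / η) * f h)) • Kker2 c g h

def CstarE {n : ℕ} (c : ℝ) (φ : ℝ → ℝ) (f : G n → ℝ) (g : G n) : ℝ≥0∞ :=
  ⨆ (η : ℝ) (_ : 0 < η), ENNReal.ofReal ‖Ceta c φ η f g‖

def IsCompactComm {n : ℕ} (c p κ : ℝ) (w b : G n → ℝ) : Prop :=
  ∀ F : Set (G n → ℝ), (∀ f ∈ F, MemMorrey p κ w f) →
    (∃ M : ℝ, ∀ f ∈ F, morreyNorm p κ w f ≤ ENNReal.ofReal M) →
    ∀ ε : ℝ, 0 < ε → ∃ T : Set (G n → Quaternion ℝ), T.Finite ∧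
      ∀ f ∈ F, ∃ t ∈ T,
        morreyNormE p κ w (fun g => ENNReal.ofReal ‖commFun c b f g - t g‖) < ENNReal.ofReal ε

end QHeis

namespace QHeis

variable {n : ℕ}

/-! ### The group law and the homogeneous norm -/

/-- The `α`-th component of `Im⟨y, y'⟩`, as a real bilinear form. -/
def bil (α : Fin 3) (y y' : Fin (4*(n-1)) → ℝ) : ℝ :=
  ∑ l : Fin (n-1), ∑ k : Fin 4, ∑ j : Fin 4, bmat α k j * y (idx l k) * y' (idx l j)

lemma mul_fst (a b : G n) (α : Fin 3) :
    (mul a b).1 α = a.1 α + b.1 α + 2 * bil α a.2 b.2 := rfl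

lemma mul_snd (a b : G n) : (mul a b).2 = a.2 + b.2 := rfl

lemma bil_add_left (α : Fin 3) (x y z : Fin (4*(n-1)) → ℝ) :
    bil α (x + y) z = bil α x z + bil α y z := by
  simp only [bil, Pi.add_apply, ← Finset.sum_add_distrib]
  refine Finset.sum_congr rfl fun _ _ => Finset.sum_congr rfl fun _ _ =>
    Finset.sum_congr rfl fun _ _ => by ring

lemma bil_add_right (α : Fin 3) (x y z : Fin (4*(n-1)) → ℝ) :
    bil α x (y + z) = bil α x y + bil α x z := by
  simp only [bil, Pi.add_apply, ← Finset.sum_add_distrib]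
  refine Finset.sum_congr rfl fun _ _ => Finset.sum_congr rfl fun _ _ =>
    Finset.sum_congr rfl fun _ _ => by ring

lemma bil_neg_left (α : Fin 3) (x y : Fin (4*(n-1)) → ℝ) : bil α (-x) y = - bil α x y := by
  simp [bil]

lemma bil_neg_right (α : Fin 3) (x y : Fin (4*(n-1)) → ℝ) : bil α x (-y) = - bil α x y := by
  simp [bil]

lemma bil_self (α : Fin 3) (x : Fin (4*(n-1)) → ℝ) : bil α x x = 0 := by
  unfold bil
  refine Finset.sum_eq_zero fun l _ => ?_
  fin_cases α <;> simp [Fin.sum_univ_four, bmat] <;> ring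

lemma bil_anti (α : Fin 3) (x y : Fin (4*(n-1)) → ℝ) : bil α x y = - bil α y x := by
  have h := bil_self α (x + y)
  rw [bil_add_left, bil_add_right, bil_add_right, bil_self, bil_self] at h
  linarith

lemma mul_assoc' (a b c : G n) : mul (mul a b) c = mul a (mul b c) := by
  refine Prod.ext (funext fun α => ?_) ?_
  · simp only [mul_fst, mul_snd, bil_add_left, bil_add_right]; ring
  · simp only [mul_snd, add_assoc]

lemma inv_mul_self (a : G n) : mul (inv a) a = 0 := by
  refine Prod.ext (funext fun α => ?_) ?_
  · rw [mul_fst]; simp [inv, bil_neg_left, bil_self]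
  · simp [mul_snd, inv]

lemma mul_inv_self (a : G n) : mul a (inv a) = 0 := by
  refine Prod.ext (funext fun α => ?_) ?_
  · rw [mul_fst]; simp [inv, bil_neg_right, bil_self]
  · simp [mul_snd, inv]

lemma zero_mul' (a : G n) : mul 0 a = a := by
  refine Prod.ext (funext fun α => ?_) ?_
  · rw [mul_fst]; simp [bil]
  · simp [mul_snd]

lemma inv_mul_rev (a b : G n) : inv (mul a b) = mul (inv b) (inv a) := by
  refine Prod.ext (funext fun α => ?_) ?_
  · simp only [mul_fst, inv, Pi.neg_apply, bil_neg_left, bil_neg_right, neg_neg, mul_snd]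
    rw [bil_anti α b.2 a.2]; ring
  · simp [mul_snd, inv, add_comm]

lemma inv_inv' (a : G n) : inv (inv a) = a := by simp [inv]

lemma inv_mul_cancel_left' (a b : G n) : mul (inv a) (mul a b) = b := by
  rw [← mul_assoc', inv_mul_self, zero_mul']

lemma mul_inv_cancel_left' (a b : G n) : mul a (mul (inv a) b) = b := by
  rw [← mul_assoc', mul_inv_self, zero_mul']

lemma hnorm_nonneg (g : G n) : 0 ≤ hnorm g := by unfold hnorm; positivity

lemma hnorm_pow (g : G n) : hnorm g ^ 4 = (∑ i, (g.2 i)^2)^2 + ∑ α, (g.1 α)^2 := by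
  unfold hnorm
  rw [← Real.rpow_natCast, ← Real.rpow_mul (by positivity)]
  norm_num

lemma hnorm_le_of_pow {g : G n} {s : ℝ} (hs : 0 ≤ s) (h : hnorm g ^ 4 ≤ s ^ 4) : hnorm g ≤ s :=
  le_of_pow_le_pow_left₀ (by norm_num) hs h

lemma abs_snd_le (g : G n) (i) : |g.2 i| ≤ hnorm g := by
  refine le_of_pow_le_pow_left₀ (n := 4) (by norm_num) (hnorm_nonneg g) ?_
  rw [hnorm_pow]
  have h1 : (g.2 i)^2 ≤ ∑ i, (g.2 i)^2 :=
    Finset.single_le_sum (f := fun i => (g.2 i)^2) (fun i _ => sq_nonneg _) (Finset.mem_univ i)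
  have h2 : 0 ≤ ∑ α, (g.1 α)^2 := Finset.sum_nonneg fun i _ => sq_nonneg _
  have h3 : |g.2 i|^4 = ((g.2 i)^2)^2 := by rw [← sq_abs (g.2 i)]; ring
  rw [h3]
  have : ((g.2 i)^2)^2 ≤ (∑ i, (g.2 i)^2)^2 := pow_le_pow_left₀ (sq_nonneg _) h1 2
  linarith

lemma abs_fst_le (g : G n) (α) : |g.1 α| ≤ hnorm g ^ 2 := by
  refine le_of_pow_le_pow_left₀ (n := 2) (by norm_num) (by positivity) ?_
  rw [← pow_mul, hnorm_pow, sq_abs]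
  have h1 : (g.1 α)^2 ≤ ∑ i, (g.1 i)^2 :=
    Finset.single_le_sum (f := fun i => (g.1 i)^2) (fun i _ => sq_nonneg _) (Finset.mem_univ α)
  nlinarith [sq_nonneg (∑ i, (g.2 i)^2)]

lemma hnorm_le_of_coord {g : G n} {s : ℝ} (hs : 0 ≤ s) (h1 : ∀ α, |g.1 α| ≤ s ^ 2)
    (h2 : ∀ i, |g.2 i| ≤ s) : hnorm g ≤ (((4*(n-1) : ℕ) : ℝ)^2 + 3) * s := by
  set N : ℝ := ((4*(n-1) : ℕ) : ℝ)
  refine hnorm_le_of_pow (by positivity) ?_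
  rw [hnorm_pow]
  have e1 : ∑ i, (g.2 i)^2 ≤ N * s^2 := by
    calc ∑ i, (g.2 i)^2 ≤ ∑ i : Fin (4*(n-1)), s^2 :=
          Finset.sum_le_sum fun i _ => sq_le_sq' (by linarith [abs_le.1 (h2 i)]) (abs_le.1 (h2 i)).2
      _ = N * s^2 := by simp [N]
  have e2 : ∑ i, (g.1 i)^2 ≤ 3 * s^4 := by
    calc ∑ i, (g.1 i)^2 ≤ ∑ i : Fin 3, (s^2)^2 :=
          Finset.sum_le_sum fun i _ => sq_le_sq' (by linarith [abs_le.1 (h1 i)]) (abs_le.1 (h1 i)).2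
      _ = 3 * s^4 := by simp; ring
  have e3 : (∑ i, (g.2 i)^2)^2 ≤ (N * s^2)^2 :=
    pow_le_pow_left₀ (Finset.sum_nonneg fun i _ => sq_nonneg _) e1 2
  have e4 : (N^2+3) ≤ (N^2+3)^4 := le_self_pow₀ (by nlinarith) (by norm_num)
  calc _ ≤ (N * s^2)^2 + 3 * s^4 := by linarith
    _ = (N^2+3) * s^4 := by ring
    _ ≤ (N^2+3)^4 * s^4 := by gcongr
    _ = _ := by ring

lemma abs_bmat_le (α k j) : |bmat α k j| ≤ 1 := by
  fin_cases α <;> fin_cases k <;> fin_cases j <;> simp [bmat]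

lemma abs_bil_le (α : Fin 3) (y y' : Fin (4*(n-1)) → ℝ) {s s' : ℝ} (hs : 0 ≤ s) (hs' : 0 ≤ s')
    (h : ∀ i, |y i| ≤ s) (h' : ∀ i, |y' i| ≤ s') : |bil α y y'| ≤ 16 * n * s * s' := by
  have key : ∀ l k j, |bmat α k j * y (idx l k) * y' (idx l j)| ≤ s * s' := fun l k j => by
    rw [abs_mul, abs_mul]
    have h0 := abs_bmat_le α k j
    calc _ ≤ 1 * s * s' := by
          gcongr
          · exact h _
          · exact h' _
      _ = _ := by ring
  calc |bil α y y'| ≤ ∑ l : Fin (n-1), ∑ k : Fin 4, ∑ j : Fin 4, s * s' := by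
        refine (Finset.abs_sum_le_sum_abs _ _).trans (Finset.sum_le_sum fun l _ => ?_)
        refine (Finset.abs_sum_le_sum_abs _ _).trans (Finset.sum_le_sum fun k _ => ?_)
        exact (Finset.abs_sum_le_sum_abs _ _).trans (Finset.sum_le_sum fun j _ => key l k j)
    _ = ((n-1 : ℕ) : ℝ) * (16 * (s * s')) := by
        simp only [Finset.sum_const, Finset.card_univ, Fintype.card_fin, nsmul_eq_mul,
          Nat.cast_ofNat]
        ring
    _ ≤ (n : ℝ) * (16 * (s * s')) := by
        gcongr; omega
    _ = _ := by ring

end QHeis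

namespace QHeis

variable {n : ℕ}

/-! ### The quasi-distance and the volume of balls -/

/-- The constant in the quasi-triangle inequality for `hnorm`; it is not optimal. -/
def qK (n : ℕ) : ℝ := (((4*(n-1) : ℕ) : ℝ)^2 + 3) * (16 * n + 1)

lemma one_le_qK (n : ℕ) : 1 ≤ qK n := by
  unfold qK
  have h1 : (1:ℝ) ≤ ((4*(n-1) : ℕ) : ℝ)^2 + 3 := by nlinarith [sq_nonneg (((4*(n-1) : ℕ) : ℝ))]
  have h2 : (1:ℝ) ≤ 16 * n + 1 := by have : (0:ℝ) ≤ n := n.cast_nonneg; linarith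
  exact one_le_mul_of_one_le_of_one_le h1 h2

lemma hnorm_mul_le (a b : G n) : hnorm (mul a b) ≤ qK n * (hnorm a + hnorm b) := by
  have ha := hnorm_nonneg a
  have hb := hnorm_nonneg b
  have hn : (0:ℝ) ≤ n := n.cast_nonneg
  rw [qK, mul_assoc]
  refine hnorm_le_of_coord (by positivity) (fun α => ?_) (fun i => ?_)
  · rw [mul_fst]
    have h1 := abs_bil_le α a.2 b.2 ha hb (abs_snd_le a) (abs_snd_le b)
    have h2 := abs_fst_le a α
    have h3 := abs_fst_le b α
    calc |a.1 α + b.1 α + 2 * bil α a.2 b.2|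
        ≤ |a.1 α| + |b.1 α| + |2 * bil α a.2 b.2| := abs_add_three _ _ _
      _ = |a.1 α| + |b.1 α| + 2 * |bil α a.2 b.2| := by rw [abs_mul]; norm_num
      _ ≤ hnorm a ^ 2 + hnorm b ^ 2 + 2 * (16 * n * hnorm a * hnorm b) := by gcongr
      _ ≤ _ := by
        have : 0 ≤ hnorm a * hnorm b := mul_nonneg ha hb
        have h4 : 0 ≤ (256 * (n:ℝ)^2 + 32 * n) * (hnorm a + hnorm b)^2 := by positivity
        have h5 : 0 ≤ (n:ℝ) * (hnorm a ^2 + hnorm b ^2) := by positivity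
        have h6 : 0 ≤ (n:ℝ)^2 * (hnorm a + hnorm b) ^2 := by positivity
        nlinarith
  · rw [mul_snd, Pi.add_apply]
    calc |a.2 i + b.2 i| ≤ |a.2 i| + |b.2 i| := abs_add_le _ _
      _ ≤ 1 * (hnorm a + hnorm b) := by rw [one_mul]; exact add_le_add (abs_snd_le a i) (abs_snd_le b i)
      _ ≤ _ := by gcongr; linarith

lemma hnorm_inv (g : G n) : hnorm (inv g) = hnorm g := by simp [hnorm, inv]

lemma hnorm_zero : hnorm (0 : G n) = 0 := by simp [hnorm]

lemma rho_zero (x : G n) : rho x 0 = hnorm x := by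
  have : inv (0 : G n) = 0 := by simp [inv]
  rw [rho, this, zero_mul']

lemma rho_nonneg (x y : G n) : 0 ≤ rho x y := hnorm_nonneg _

lemma rho_self (x : G n) : rho x x = 0 := by rw [rho, inv_mul_self, hnorm_zero]

lemma rho_comm (x y : G n) : rho x y = rho y x := by
  rw [rho, rho, ← hnorm_inv, inv_mul_rev, inv_inv']

lemma rho_triangle (x y z : G n) : rho x z ≤ qK n * (rho x y + rho y z) := by
  have : mul (inv z) x = mul (mul (inv z) y) (mul (inv y) x) := by
    rw [mul_assoc', mul_inv_cancel_left']
  rw [rho, this, add_comm]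
  exact hnorm_mul_le _ _

lemma mem_ball' {g x : G n} {r : ℝ} : x ∈ ball g r ↔ rho x g < r := Iff.rfl

lemma mem_ball_comm {g x : G n} {r : ℝ} : x ∈ ball g r ↔ g ∈ ball x r := by
  rw [mem_ball', mem_ball', rho_comm]

lemma mem_ball_zero {x : G n} {r : ℝ} : x ∈ ball (0 : G n) r ↔ hnorm x < r := by
  rw [mem_ball', rho_zero]

lemma center_mem {g : G n} {r : ℝ} (hr : 0 < r) : g ∈ ball g r := by
  rw [mem_ball', rho_self]; exact hr

lemma ball_mono {g : G n} {r s : ℝ} (h : r ≤ s) : ball g r ⊆ ball g s :=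
  fun _ hx => lt_of_lt_of_le hx h

/-- The radius `t` need only dominate `qK n * (r + s)`, because `rho` is handled throughout as a
quasi-distance. -/
lemma ball_subset_ball {g x : G n} {r s t : ℝ} (hx : rho x g < s) (ht : qK n * (r + s) ≤ t) :
    ball x r ⊆ ball g t := by
  intro y hy
  have hK := one_le_qK n
  calc rho y g ≤ qK n * (rho y x + rho x g) := rho_triangle _ _ _
    _ < qK n * (r + s) := by
        have := mem_ball'.1 hy
        gcongr
    _ ≤ t := ht

lemma continuous_hnorm : Continuous (hnorm : G n → ℝ) := by
  unfold hnorm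
  refine Continuous.rpow_const (by fun_prop) (fun _ => Or.inr (by norm_num))

lemma continuous_bil (α : Fin 3) : Continuous fun p : (Fin (4*(n-1)) → ℝ) × (Fin (4*(n-1)) → ℝ) =>
    bil α p.1 p.2 := by
  unfold bil; fun_prop

lemma continuous_mul' : Continuous fun p : G n × G n => mul p.1 p.2 := by
  refine Continuous.prodMk (continuous_pi fun α => ?_) (by fun_prop)
  have := (continuous_bil (n := n) α).comp
    (f := fun p : G n × G n => (p.1.2, p.2.2)) (by fun_prop)
  exact ((by fun_prop : Continuous fun p : G n × G n => p.1.1 α + p.2.1 α)).add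
    (continuous_const.mul this)

lemma continuous_inv' : Continuous (inv : G n → G n) := by
  unfold inv; fun_prop

lemma continuous_rho {X : Type*} [TopologicalSpace X] {u v : X → G n} (hu : Continuous u)
    (hv : Continuous v) : Continuous fun x => rho (u x) (v x) :=
  continuous_hnorm.comp (continuous_mul'.comp ((continuous_inv'.comp hv).prodMk hu))

lemma isOpen_ball' (g : G n) (r : ℝ) : IsOpen (ball g r) :=
  isOpen_lt (continuous_rho continuous_id continuous_const) continuous_const

lemma measurableSet_ball' (g : G n) (r : ℝ) : MeasurableSet (ball g r) :=
  (isOpen_ball' g r).measurableSet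

lemma isCompact_cball (r : ℝ) : IsCompact {g : G n | hnorm g ≤ r} := by
  refine Metric.isCompact_of_isClosed_isBounded
    (isClosed_le continuous_hnorm continuous_const) ?_
  refine (Metric.isBounded_closedBall (x := (0 : G n)) (r := max (r^2) r)).subset fun g hg => ?_
  have hgr : hnorm g ≤ r := hg
  have h0 := hnorm_nonneg g
  rw [mem_closedBall_zero_iff, Prod.norm_def]
  refine max_le_max ?_ ?_
  · refine (pi_norm_le_iff_of_nonneg (by positivity)).2 fun α => ?_
    exact (abs_fst_le g α).trans (by gcongr)
  · refine (pi_norm_le_iff_of_nonneg (h0.trans hgr)).2 fun α => ?_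
    exact (abs_snd_le g α).trans hgr

/-- Left translations are shears along the centre composed with Euclidean translations, so they
preserve Lebesgue measure. -/
lemma measurePreserving_mul (a : G n) : MeasurePreserving (mul a) volume volume := by
  have h1 : MeasurePreserving (fun p : (Fin (4*(n-1)) → ℝ) × (Fin 3 → ℝ) =>
      ((a.2 + p.1, fun α => a.1 α + p.2 α + 2 * bil α a.2 p.1) :
        (Fin (4*(n-1)) → ℝ) × (Fin 3 → ℝ)))
      (volume.prod volume) (volume.prod volume) := by
    refine MeasurePreserving.skew_product (f := fun y => a.2 + y)
      (g := fun y (t : Fin 3 → ℝ) α => a.1 α + t α + 2 * bil α a.2 y)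
      (measurePreserving_add_left volume a.2) ?_ (ae_of_all _ fun y => ?_)
    · refine Continuous.measurable (continuous_pi fun α => ?_)
      have := (continuous_bil (n := n) α).comp
        (f := fun p : (Fin (4*(n-1)) → ℝ) × (Fin 3 → ℝ) => (a.2, p.1)) (by fun_prop)
      exact ((by fun_prop : Continuous fun p : (Fin (4*(n-1)) → ℝ) × (Fin 3 → ℝ) =>
        a.1 α + p.2 α)).add (continuous_const.mul this)
    · have : (fun (t : Fin 3 → ℝ) α => a.1 α + t α + 2 * bil α a.2 y)
          = fun t => (fun α => a.1 α + 2 * bil α a.2 y) + t := by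
        funext t α; simp only [Pi.add_apply]; ring
      rw [this]
      exact (measurePreserving_add_left volume _).map_eq
  have h2 : MeasurePreserving (Prod.swap : (Fin 3 → ℝ) × (Fin (4*(n-1)) → ℝ) → _)
      (volume.prod volume) (volume.prod volume) := Measure.measurePreserving_swap
  have h3 : MeasurePreserving (Prod.swap : (Fin (4*(n-1)) → ℝ) × (Fin 3 → ℝ) → _)
      (volume.prod volume) (volume.prod volume) := Measure.measurePreserving_swap
  exact h3.comp (h1.comp h2)

instance : (volume : Measure (G n)).IsAddHaarMeasure :=
  Measure.prod.instIsAddHaarMeasure _ _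

/-- The homogeneous dimension `4(n-1) + 6` of the group. -/
def hdim (n : ℕ) : ℕ := 6 + 4*(n-1)

/-- The dilation `dil r` as a linear map. -/
def dilLin (n : ℕ) (r : ℝ) : G n →ₗ[ℝ] G n :=
  LinearMap.prodMap (r^2 • LinearMap.id) (r • LinearMap.id)

lemma det_dilLin (r : ℝ) : LinearMap.det (dilLin n r) = r ^ hdim n := by
  rw [dilLin, LinearMap.det_prodMap]
  simp only [LinearMap.det_smul, LinearMap.det_id, Module.finrank_fintype_fun_eq_card,
    Fintype.card_fin, mul_one, hdim]
  ring

lemma dilLin_apply (r : ℝ) (g : G n) : dilLin n r g = dil r g := by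
  refine Prod.ext ?_ ?_ <;> ext <;> simp [dilLin, dil]

lemma hnorm_dil {r : ℝ} (hr : 0 ≤ r) (g : G n) : hnorm (dil r g) = r * hnorm g := by
  have h : hnorm (dil r g) ^ 4 = (r * hnorm g) ^ 4 := by
    rw [mul_pow, hnorm_pow, hnorm_pow]
    simp only [dil, mul_pow, ← Finset.mul_sum]
    ring
  exact (pow_left_inj₀ (hnorm_nonneg _) (mul_nonneg hr (hnorm_nonneg _)) (by norm_num)).1 h

lemma volume_ball_eq_zero (g : G n) (r : ℝ) : volume (ball g r) = volume (ball (0 : G n) r) := by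
  have : ball g r = mul (inv g) ⁻¹' ball 0 r := by
    ext x; rw [Set.mem_preimage, mem_ball_zero]; rfl
  rw [this, (measurePreserving_mul (inv g)).measure_preimage
    (measurableSet_ball' _ _).nullMeasurableSet]

lemma volume_ball (g : G n) {r : ℝ} (hr : 0 < r) :
    volume (ball g r) = ENNReal.ofReal (r ^ hdim n) * volume (ball (0 : G n) 1) := by
  have : ball (0 : G n) r = dilLin n r⁻¹ ⁻¹' ball 0 1 := by
    ext x
    rw [Set.mem_preimage, mem_ball_zero, mem_ball_zero, dilLin_apply, hnorm_dil (by positivity),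
      inv_mul_lt_iff₀ hr, mul_one]
  rw [volume_ball_eq_zero, this, Measure.addHaar_preimage_linearMap]
  · rw [det_dilLin, inv_pow, inv_inv, abs_of_pos (by positivity)]
  · rw [det_dilLin]; positivity

lemma volume_ball_lt_top (g : G n) (r : ℝ) : volume (ball g r) < ⊤ := by
  rw [volume_ball_eq_zero]
  refine (measure_mono ?_).trans_lt (isCompact_cball (n := n) r).measure_lt_top
  intro x hx
  exact (mem_ball_zero.1 hx).le

lemma volume_ball_pos (g : G n) {r : ℝ} (hr : 0 < r) : 0 < volume (ball g r) :=
  (isOpen_ball' g r).measure_pos _ ⟨g, center_mem hr⟩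

/-- The volume of the unit ball. -/
def vol1 (n : ℕ) : ℝ := (volume (ball (0 : G n) 1)).toReal

lemma vol1_pos (n : ℕ) : 0 < vol1 n :=
  ENNReal.toReal_pos (volume_ball_pos _ one_pos).ne' (volume_ball_lt_top _ _).ne

lemma vol_ball (g : G n) {r : ℝ} (hr : 0 < r) :
    (volume (ball g r)).toReal = r ^ hdim n * vol1 n := by
  rw [volume_ball g hr, ENNReal.toReal_mul, ENNReal.toReal_ofReal (by positivity), vol1]

lemma vol_ball_pos (g : G n) {r : ℝ} (hr : 0 < r) : 0 < (volume (ball g r)).toReal := by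
  rw [vol_ball g hr]; have := vol1_pos n; positivity

end QHeis

namespace QHeis

variable {n : ℕ}

/-! ### Averages and mean oscillation -/

section Avg

variable {g : G n} {r : ℝ} {f h : G n → ℝ}

lemma integrableOn_const' (g : G n) (r c : ℝ) : IntegrableOn (fun _ : G n => c) (ball g r) :=
  integrableOn_const (volume_ball_lt_top g r).ne

lemma avg_mono (hf : IntegrableOn f (ball g r)) (hh : IntegrableOn h (ball g r))
    (H : ∀ x ∈ ball g r, f x ≤ h x) : avg (ball g r) f ≤ avg (ball g r) h := by
  unfold avg
  exact mul_le_mul_of_nonneg_left (setIntegral_mono_on hf hh (measurableSet_ball' g r) H)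
    (by positivity)

lemma avg_add (hf : IntegrableOn f (ball g r)) (hh : IntegrableOn h (ball g r)) :
    avg (ball g r) (fun x => f x + h x) = avg (ball g r) f + avg (ball g r) h := by
  unfold avg
  rw [integral_add hf hh, mul_add]

lemma avg_sub (hf : IntegrableOn f (ball g r)) (hh : IntegrableOn h (ball g r)) :
    avg (ball g r) (fun x => f x - h x) = avg (ball g r) f - avg (ball g r) h := by
  unfold avg
  rw [integral_sub hf hh, mul_sub]

lemma avg_const (hr : 0 < r) (c : ℝ) : avg (ball g r) (fun _ => c) = c := by
  unfold avg
  have := (vol_ball_pos g hr).ne'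
  rw [setIntegral_const, smul_eq_mul, Measure.real, inv_mul_cancel_left₀ this]

lemma avg_const_mul (c : ℝ) : avg (ball g r) (fun x => c * f x) = c * avg (ball g r) f := by
  unfold avg
  rw [integral_const_mul]; ring

lemma avg_nonneg (H : ∀ x, 0 ≤ f x) : 0 ≤ avg (ball g r) f :=
  mul_nonneg (by positivity) (integral_nonneg H)

lemma abs_avg_le : |avg (ball g r) f| ≤ avg (ball g r) (fun x => |f x|) := by
  unfold avg
  rw [abs_mul, abs_of_nonneg (by positivity : (0:ℝ) ≤ (volume (ball g r)).toReal⁻¹)]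
  gcongr
  exact abs_integral_le_integral_abs

lemma avg_congr (H : ∀ x ∈ ball g r, f x = h x) : avg (ball g r) f = avg (ball g r) h := by
  unfold avg
  rw [setIntegral_congr_fun (measurableSet_ball' g r) H]

lemma oscB_nonneg : 0 ≤ oscB f g r := avg_nonneg fun _ => abs_nonneg _

lemma integrableOn_abs_sub (hf : IntegrableOn f (ball g r)) (c : ℝ) :
    IntegrableOn (fun x => |f x - c|) (ball g r) :=
  (Integrable.sub hf (integrableOn_const' g r c)).abs

/-- Up to a factor `2`, the mean oscillation may be computed with any constant in place of the
average. -/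
lemma oscB_le_two_mul (hr : 0 < r) (hf : IntegrableOn f (ball g r)) (c : ℝ) :
    oscB f g r ≤ 2 * avg (ball g r) (fun x => |f x - c|) := by
  have hc := integrableOn_abs_sub hf c
  set m := avg (ball g r) f
  have h1 : |c - m| ≤ avg (ball g r) (fun x => |f x - c|) := by
    have : m - c = avg (ball g r) (fun x => f x - c) := by
      rw [avg_sub hf (integrableOn_const' g r c), avg_const hr]
    rw [abs_sub_comm, this]
    exact abs_avg_le
  calc oscB f g r ≤ avg (ball g r) (fun x => |f x - c| + |c - m|) :=
        avg_mono (integrableOn_abs_sub hf m) (hc.add (integrableOn_const' g r _))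
          fun x _ => abs_sub_le _ _ _
    _ = avg (ball g r) (fun x => |f x - c|) + |c - m| := by
        rw [avg_add hc (integrableOn_const' g r _), avg_const hr]
    _ ≤ _ := by linarith

lemma oscB_le_of_le (hr : 0 < r) (hf : IntegrableOn f (ball g r)) (c s : ℝ)
    (H : ∀ x ∈ ball g r, |f x - c| ≤ s) : oscB f g r ≤ 2 * s := by
  refine (oscB_le_two_mul hr hf c).trans ?_
  have := avg_mono (integrableOn_abs_sub hf c) (integrableOn_const' g r s) H
  rw [avg_const hr] at this
  linarith

lemma oscB_add_le (hf : IntegrableOn f (ball g r)) (hh : IntegrableOn h (ball g r)) :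
    oscB (fun x => f x + h x) g r ≤ oscB f g r + oscB h g r := by
  have h1 := integrableOn_abs_sub hf (avg (ball g r) f)
  have h2 := integrableOn_abs_sub hh (avg (ball g r) h)
  unfold oscB
  rw [avg_add hf hh, ← avg_add h1 h2]
  refine avg_mono (integrableOn_abs_sub (f := fun x => f x + h x) (hf.add hh) _) (h1.add h2)
    fun x _ => ?_
  rw [add_sub_add_comm]
  exact abs_add_le _ _

lemma oscB_sub_le (hf : IntegrableOn f (ball g r)) (hh : IntegrableOn h (ball g r)) :
    oscB (fun x => f x - h x) g r ≤ oscB f g r + oscB h g r := by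
  have h1 := integrableOn_abs_sub hf (avg (ball g r) f)
  have h2 := integrableOn_abs_sub hh (avg (ball g r) h)
  unfold oscB
  rw [avg_sub hf hh, ← avg_add h1 h2]
  refine avg_mono (integrableOn_abs_sub (f := fun x => f x - h x) (hf.sub hh) _) (h1.add h2)
    fun x _ => ?_
  rw [sub_sub_sub_comm]
  exact abs_sub _ _

lemma oscB_congr (H : ∀ x ∈ ball g r, f x = h x) : oscB f g r = oscB h g r := by
  unfold oscB
  rw [avg_congr H]
  exact avg_congr fun x hx => by rw [H x hx]

lemma oscB_zero (H : ∀ x ∈ ball g r, f x = 0) : oscB f g r = 0 := by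
  rw [oscB_congr (h := fun _ => 0) H]
  simp [oscB, avg]

/-- Composition with a 1-Lipschitz function at most doubles the mean oscillation. -/
lemma oscB_lip_comp (hr : 0 < r) (hf : IntegrableOn f (ball g r))
    (hh : IntegrableOn h (ball g r)) (T : ℝ → ℝ) (hT : ∀ s t, |T s - T t| ≤ |s - t|)
    (H : ∀ x, h x = T (f x)) : oscB h g r ≤ 2 * oscB f g r := by
  refine (oscB_le_two_mul hr hh (T (avg (ball g r) f))).trans ?_
  gcongr
  exact avg_mono (integrableOn_abs_sub hh _) (integrableOn_abs_sub hf _)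
    fun x _ => by rw [H]; exact hT _ _

end Avg

lemma isLocInt_of_continuous {f : G n → ℝ} (hf : Continuous f) : IsLocInt f := by
  intro g r hr
  have hK := one_le_qK n
  refine (hf.continuousOn.integrableOn_compact
    (isCompact_cball (n := n) (qK n * (r + (rho g 0 + 1))))).mono_set fun x hx => ?_
  have := ball_subset_ball (x := g) (g := 0) (r := r) (s := rho g 0 + 1) (by linarith) le_rfl hx
  exact (mem_ball_zero.1 this).le

lemma IsLocInt.sub {f h : G n → ℝ} (hf : IsLocInt f) (hh : IsLocInt h) :
    IsLocInt (fun x => f x - h x) := fun g r hr => Integrable.sub (hf g r hr) (hh g r hr)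

lemma oscB_lt_of_bmoNorm_lt {b : G n → ℝ} (hb : InBMO b) {ε : ℝ} (h : bmoNorm b < ε)
    (g : G n) {r : ℝ} (hr : 0 < r) : oscB b g r < ε := by
  obtain ⟨-, C, hC⟩ := hb
  obtain ⟨C', ⟨-, hC'⟩, hlt⟩ := exists_lt_of_csInf_lt (s := {C : ℝ | 0 ≤ C ∧
    ∀ (g : G n) (r : ℝ), 0 < r → oscB b g r ≤ C})
    ⟨max C 0, le_max_right _ _, fun g r hr => (hC g r hr).trans (le_max_left _ _)⟩ h
  exact (hC' g r hr).trans_lt hlt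

lemma bmoNorm_le {b : G n → ℝ} {C : ℝ} (hC : 0 ≤ C)
    (h : ∀ (g : G n) (r : ℝ), 0 < r → oscB b g r ≤ C) : bmoNorm b ≤ C :=
  csInf_le ⟨0, fun _ hx => hx.1⟩ ⟨hC, h⟩

lemma oscB_lt_add {f φ : G n → ℝ} (hφ : IsLocInt φ) (hb : InBMO fun x => f x - φ x)
    {ε : ℝ} (h : bmoNorm (fun x => f x - φ x) < ε) (g : G n) {r : ℝ} (hr : 0 < r) :
    oscB f g r < oscB φ g r + ε := by
  have h1 := oscB_lt_of_bmoNorm_lt hb h g hr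
  have h2 := oscB_add_le (hφ g r hr) (hb.1 g r hr)
  simp only [add_sub_cancel] at h2
  linarith

/-! ### Necessity of the three conditions -/

/-- A continuous compactly supported function is uniformly continuous for `rho`. -/
lemma exists_unif {φ : G n → ℝ} (hc : Continuous φ) (hs : HasCompactSupport φ) {ε : ℝ}
    (hε : 0 < ε) : ∃ a > 0, ∀ x y : G n, rho x y < a → |φ x - φ y| < ε := by
  -- Otherwise there are `x_k` and `z_k → 0` with `φ (x_k z_k)` far from `φ x_k`; these may be
  -- taken in a compact set.
  by_contra! H
  have H' : ∀ k : ℕ, ∃ p : G n × G n, rho p.2 p.1 < 1 / ((k:ℝ) + 1) ∧ p.1 ∈ tsupport φ ∧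
      ε ≤ |φ p.1 - φ p.2| := by
    intro k
    obtain ⟨x, y, h1, h2⟩ := H (1 / ((k:ℝ) + 1)) (by positivity)
    by_cases hx : x ∈ tsupport φ
    · exact ⟨(x, y), by rw [rho_comm]; exact h1, hx, h2⟩
    · by_cases hy : y ∈ tsupport φ
      · exact ⟨(y, x), h1, hy, by rw [abs_sub_comm]; exact h2⟩
      · rw [image_eq_zero_of_notMem_tsupport hx, image_eq_zero_of_notMem_tsupport hy] at h2
        simp at h2; linarith
  choose p hp1 hp2 hp3 using H'
  obtain ⟨x, -, s, hsm, hlim⟩ := hs.isCompact.tendsto_subseq hp2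
  set z : ℕ → G n := fun k => mul (inv (p k).1) (p k).2
  have hz0 : Tendsto (fun k => hnorm (z k)) atTop (𝓝 0) :=
    squeeze_zero (fun k => hnorm_nonneg _) (fun k => (hp1 k).le) tendsto_one_div_add_atTop_nhds_zero_nat
  have hz : Tendsto z atTop (𝓝 0) := by
    refine Prod.tendsto_iff _ _ |>.2 ⟨tendsto_pi_nhds.2 fun α => ?_, tendsto_pi_nhds.2 fun i => ?_⟩
    · refine squeeze_zero_norm (fun k => abs_fst_le (z k) α) ?_
      simpa using hz0.pow 2
    · exact squeeze_zero_norm (fun k => abs_snd_le (z k) i) hz0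
  have hy : Tendsto (fun k => (p (s k)).2) atTop (𝓝 x) := by
    have h1 : ∀ k, (p (s k)).2 = mul (p (s k)).1 (z (s k)) := fun k =>
      (mul_inv_cancel_left' _ _).symm
    have h2 : mul x (0 : G n) = x := by
      rw [← inv_mul_self x, mul_inv_cancel_left']
    simp_rw [h1]
    have h3 := (continuous_mul' (n := n)).tendsto (x, 0)
    rw [h2] at h3
    exact h3.comp (hlim.prodMk_nhds (hz.comp hsm.tendsto_atTop))
  have hlim' : Tendsto (fun k => |φ (p (s k)).1 - φ (p (s k)).2|) atTop (𝓝 |φ x - φ x|) :=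
    (((hc.tendsto x).comp hlim).sub ((hc.tendsto x).comp hy)).abs
  rw [sub_self, abs_zero] at hlim'
  have := ge_of_tendsto' hlim' fun k => hp3 (s k)
  linarith

lemma exists_ball_supset {S : Set (G n)} (hS : IsCompact S) :
    ∃ R > 0, S ⊆ ball (0 : G n) R := by
  obtain ⟨R, hR⟩ := hS.bddAbove_image continuous_hnorm.continuousOn
  refine ⟨max R 0 + 1, by positivity, fun x hx => ?_⟩
  have : hnorm x ≤ R := hR ⟨x, hx, rfl⟩
  rw [mem_ball_zero]
  exact lt_of_le_of_lt (this.trans (le_max_left _ _)) (lt_add_one _)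

lemma necessity {f : G n → ℝ} (hf : InVMO f) :
    (∀ ε : ℝ, 0 < ε → ∃ a₀ : ℝ, 0 < a₀ ∧
          ∀ (g : G n) (r : ℝ), 0 < r → r < a₀ → oscB f g r < ε) ∧
       (∀ ε : ℝ, 0 < ε → ∃ a₀ : ℝ, 0 < a₀ ∧
          ∀ (g : G n) (r : ℝ), a₀ < r → oscB f g r < ε) ∧
       (∀ ε : ℝ, 0 < ε → ∃ R : ℝ, 0 < R ∧
          ∀ (g : G n) (r : ℝ), 0 < r → ball g r ⊆ (ball (0 : G n) R)ᶜ →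
            oscB f g r < ε) := by
  refine ⟨fun ε hε => ?_, fun ε hε => ?_, fun ε hε => ?_⟩ <;>
    obtain ⟨φ, hφ, hs, hb, hlt⟩ := hf.2 (ε/2) (half_pos hε) <;>
    have hc := hφ.continuous <;>
    have hL := isLocInt_of_continuous hc
  · obtain ⟨a, ha, H⟩ := exists_unif hc hs (ε := ε/4) (by positivity)
    refine ⟨a, ha, fun g r hr hra => (oscB_lt_add hL hb hlt g hr).trans_le ?_⟩
    have := oscB_le_of_le hr (hL g r hr) (φ g) (ε/4) fun x hx =>
      (H x g ((mem_ball'.1 hx).trans hra)).le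
    linarith
  · have hi : Integrable φ := hc.integrable_of_hasCompactSupport hs
    set I := ∫ x, |φ x| with hI
    have hI0 : 0 ≤ I := integral_nonneg fun _ => abs_nonneg _
    have hv := vol1_pos n
    refine ⟨max 1 (4 * I / (ε * vol1 n)), by positivity, fun g r hr' => ?_⟩
    have hr1 : 1 < r := (le_max_left _ _).trans_lt hr'
    have hr : 0 < r := by linarith
    refine (oscB_lt_add hL hb hlt g hr).trans_le ?_
    have h1 := oscB_le_two_mul hr (hL g r hr) 0
    simp only [sub_zero] at h1
    have h2 : avg (ball g r) (fun x => |φ x|) ≤ (r * vol1 n)⁻¹ * I := by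
      unfold avg
      have : r * vol1 n ≤ (volume (ball g r)).toReal := by
        rw [vol_ball g hr]
        gcongr
        exact le_self_pow₀ hr1.le (by simp [hdim])
      gcongr
      exact setIntegral_le_integral hi.abs (ae_of_all _ fun _ => abs_nonneg _)
    have h3 : 4 * I / (ε * vol1 n) < r := (le_max_right _ _).trans_lt hr'
    have h4 : (r * vol1 n)⁻¹ * I ≤ ε / 4 := by
      rw [div_lt_iff₀ (by positivity)] at h3
      rw [inv_mul_le_iff₀ (by positivity)]
      nlinarith
    linarith
  · obtain ⟨R, hR, hsub⟩ := exists_ball_supset hs.isCompact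
    refine ⟨R, hR, fun g r hr hB => (oscB_lt_add hL hb hlt g hr).trans_le ?_⟩
    rw [oscB_zero fun x hx => image_eq_zero_of_notMem_tsupport fun hx' => hB hx (hsub hx')]
    linarith

end QHeis

namespace QHeis

variable {n : ℕ}

/-! ### Averaging at a small scale -/

lemma IsLocInt.locallyIntegrable {f : G n → ℝ} (hf : IsLocInt f) : LocallyIntegrable f volume :=
  fun x => ⟨ball x 1, (isOpen_ball' x 1).mem_nhds (center_mem one_pos), hf x 1 one_pos⟩

/-- A continuous tent function supported in the ball `ball x δ`. -/
def tent (δ : ℝ) (x y : G n) : ℝ := max 0 (1 - rho y x / δ)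

lemma tent_nonneg (δ : ℝ) (x y : G n) : 0 ≤ tent δ x y := le_max_left _ _

lemma tent_le_one {δ : ℝ} (hδ : 0 < δ) (x y : G n) : tent δ x y ≤ 1 :=
  max_le zero_le_one (by have := div_nonneg (rho_nonneg y x) hδ.le; linarith)

lemma tent_eq_zero {δ : ℝ} (hδ : 0 < δ) {x y : G n} (h : y ∉ ball x δ) : tent δ x y = 0 := by
  rw [mem_ball', not_lt] at h
  exact max_eq_left (by have := (one_le_div hδ).2 h; linarith)

lemma half_le_tent {δ : ℝ} (hδ : 0 < δ) {x y : G n} (h : y ∈ ball x (δ/2)) :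
    1/2 ≤ tent δ x y := by
  refine le_max_of_le_right ?_
  have : rho y x / δ ≤ 1/2 := by rw [div_le_iff₀ hδ]; linarith [mem_ball'.1 h]
  linarith

lemma continuous_tent (δ : ℝ) {u v : G n → G n} (hu : Continuous u) (hv : Continuous v) :
    Continuous fun x => tent δ (u x) (v x) :=
  continuous_const.max (continuous_const.sub ((continuous_rho hv hu).div_const δ))

lemma abs_tent_mul_le {δ : ℝ} (hδ : 0 < δ) {f : G n → ℝ} {x y : G n} {S : Set (G n)}
    (hS : ball x δ ⊆ S) : ‖tent δ x y * f y‖ ≤ S.indicator (fun y => |f y|) y := by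
  by_cases hy : y ∈ ball x δ
  · rw [Set.indicator_of_mem (hS hy), norm_mul, Real.norm_of_nonneg (tent_nonneg _ _ _),
      Real.norm_eq_abs]
    exact mul_le_of_le_one_left (abs_nonneg _) (tent_le_one hδ x y)
  · rw [tent_eq_zero hδ hy, zero_mul, norm_zero]
    exact Set.indicator_nonneg (fun _ _ => abs_nonneg _) _

lemma integrableOn_abs {f : G n → ℝ} {S : Set (G n)} (hf : IntegrableOn f S) :
    IntegrableOn (fun x => |f x|) S := Integrable.abs hf

lemma integrable_tent_mul {δ : ℝ} (hδ : 0 < δ) {f : G n → ℝ} (hf : IsLocInt f) (x : G n) :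
    Integrable (fun y => tent δ x y * f y) := by
  refine Integrable.mono' ((integrableOn_abs (hf x δ hδ)).integrable_indicator (measurableSet_ball' x δ))
    ((continuous_tent δ continuous_const continuous_id).aestronglyMeasurable.mul
      hf.locallyIntegrable.aestronglyMeasurable)
    (ae_of_all _ fun y => abs_tent_mul_le hδ subset_rfl)

lemma continuous_tent_integral {δ : ℝ} (hδ : 0 < δ) {f : G n → ℝ} (hf : IsLocInt f) :
    Continuous fun x => ∫ y, tent δ x y * f y := by
  have hK := one_le_qK n
  refine continuous_iff_continuousAt.2 fun x₀ => ?_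
  refine continuousAt_of_dominated
    (bound := (ball x₀ (qK n * (δ + 1))).indicator (fun y => |f y|))
    (Eventually.of_forall fun x => (integrable_tent_mul hδ hf x).aestronglyMeasurable) ?_
    ((integrableOn_abs (hf x₀ _ (by positivity))).integrable_indicator (measurableSet_ball' _ _))
    (ae_of_all _ fun y => ((continuous_tent δ continuous_id continuous_const).continuousAt.mul continuousAt_const))
  filter_upwards [(isOpen_ball' x₀ 1).mem_nhds (center_mem one_pos)] with x hx
  exact ae_of_all _ fun y => abs_tent_mul_le hδ (ball_subset_ball hx le_rfl)

lemma isLocInt_const (c : ℝ) : IsLocInt (fun _ : G n => c) := isLocInt_of_continuous continuous_const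

lemma tent_mass_ge {δ : ℝ} (hδ : 0 < δ) (x : G n) :
    1/2 * ((δ/2) ^ hdim n * vol1 n) ≤ ∫ y, tent δ x y * 1 := by
  rw [← vol_ball x (half_pos hδ)]
  have h1 : (∫ y in ball x (δ/2), (1/2 : ℝ)) = 1/2 * (volume (ball x (δ/2))).toReal := by
    rw [setIntegral_const, smul_eq_mul, Measure.real, mul_comm]
  have hi := integrable_tent_mul hδ (isLocInt_const 1) x
  rw [← h1]
  refine (setIntegral_mono_on (integrableOn_const' _ _ _) hi.integrableOn
    (measurableSet_ball' _ _) fun y hy => ?_).trans (setIntegral_le_integral hi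
      (ae_of_all _ fun y => ?_))
  · rw [mul_one]; exact half_le_tent hδ hy
  · simpa using tent_nonneg δ x y

/-- The weighted average of `f` against the tent function centred at `x`. -/
def smear (δ : ℝ) (f : G n → ℝ) (x : G n) : ℝ :=
  (∫ y, tent δ x y * f y) / ∫ y, tent δ x y * 1

lemma tent_mass_pos {δ : ℝ} (hδ : 0 < δ) (x : G n) : 0 < ∫ y, tent δ x y * 1 := by
  have := vol1_pos n
  exact lt_of_lt_of_le (by positivity) (tent_mass_ge hδ x)

lemma continuous_smear {δ : ℝ} (hδ : 0 < δ) {f : G n → ℝ} (hf : IsLocInt f) :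
    Continuous (smear δ f) :=
  (continuous_tent_integral hδ hf).div (continuous_tent_integral hδ (isLocInt_const 1))
    fun x => ne_of_gt (tent_mass_pos hδ x)

/-- On a ball of radius `δ`, `smear δ f` deviates from any constant `c` by at most a multiple of the
mean deviation of `f` from `c` over a comparable ball. -/
lemma abs_smear_sub_le {δ : ℝ} (hδ : 0 < δ) {f : G n → ℝ} (hf : IsLocInt f) (c : ℝ) {g x : G n}
    (hx : x ∈ ball g δ) : |smear δ f x - c| ≤
      2 * (4 * qK n) ^ hdim n * avg (ball g (2 * qK n * δ)) (fun y => |f y - c|) := by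
  have hK := one_le_qK n
  have hv := vol1_pos n
  have hW := tent_mass_pos hδ x
  have hWg := tent_mass_ge hδ x
  set W := ∫ y, tent δ x y * 1
  have hs : 0 < 2 * qK n * δ := by positivity
  have e1 : smear δ f x - c = W⁻¹ * ∫ y, tent δ x y * (f y - c) := by
    have h1 : ∀ y, tent δ x y * (f y - c) = tent δ x y * f y - c * (tent δ x y * 1) := by
      intro y; ring
    simp_rw [h1]
    rw [integral_sub (integrable_tent_mul hδ hf x)
      ((integrable_tent_mul hδ (isLocInt_const 1) x).const_mul c), integral_const_mul]
    change _ / W - c = W⁻¹ * (_ - c * W)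
    field_simp
  have e2 : |∫ y, tent δ x y * (f y - c)| ≤ ∫ y in ball g (2 * qK n * δ), |f y - c| := by
    rw [← integral_indicator (measurableSet_ball' _ _), ← Real.norm_eq_abs]
    refine norm_integral_le_of_norm_le
      ((integrableOn_abs_sub (hf g _ hs) c).integrable_indicator (measurableSet_ball' _ _))
      (ae_of_all _ fun y => abs_tent_mul_le (f := fun y => f y - c) hδ
        (ball_subset_ball hx (by linarith)))
  set J := ∫ y in ball g (2 * qK n * δ), |f y - c| with hJ
  have hJ0 : 0 ≤ J := integral_nonneg fun _ => abs_nonneg _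
  rw [e1, abs_mul, abs_of_pos (inv_pos.2 hW)]
  calc W⁻¹ * |∫ y, tent δ x y * (f y - c)|
      ≤ (1/2 * ((δ/2) ^ hdim n * vol1 n))⁻¹ * J := by gcongr
    _ = _ := by
      rw [avg, vol_ball g hs, ← hJ, mul_pow, mul_pow, mul_pow, div_pow,
        show (4:ℝ) = 2 * 2 by norm_num, mul_pow]
      field_simp

/-- Averages over large balls are controlled by averages over balls of a fixed smaller radius, by
Tonelli's theorem. -/
lemma avg_le_of_small {h : G n → ℝ} (hh : IsLocInt h) {δ r m : ℝ} (hδ : 0 < δ) (hδr : δ ≤ r)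
    (hm : 0 ≤ m) (H : ∀ x, avg (ball x δ) (fun y => |h y|) ≤ m) (g : G n) :
    avg (ball g r) (fun y => |h y|) ≤ (2 * qK n) ^ hdim n * m := by
  have hK := one_le_qK n
  have hv := vol1_pos n
  have hr : 0 < r := hδ.trans_le hδr
  have hs : 0 < 2 * qK n * r := by positivity
  set T : Set (G n × G n) := {p | rho p.2 p.1 < δ}
  have hT : MeasurableSet T :=
    (isOpen_lt (continuous_rho continuous_snd continuous_fst) continuous_const).measurableSet
  set F : G n → ℝ≥0∞ := fun y => ENNReal.ofReal |h y|
  have hF : AEMeasurable F := by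
    have := hh.locallyIntegrable.aestronglyMeasurable.aemeasurable
    exact (measurable_norm.comp_aemeasurable this).ennreal_ofReal
  have hint : ∀ (x : G n) (t : ℝ), 0 < t →
      ∫⁻ y in ball x t, F y = ENNReal.ofReal (∫ y in ball x t, |h y|) := fun x t ht =>
    (ofReal_integral_eq_lintegral_ofReal (hh x t ht).abs (ae_of_all _ fun _ => abs_nonneg _)).symm
  have hsmall : ∀ x, ∫⁻ y in ball x δ, F y ≤ ENNReal.ofReal (m * (δ ^ hdim n * vol1 n)) := by
    intro x
    rw [hint x δ hδ]
    refine ENNReal.ofReal_le_ofReal ?_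
    have := H x
    rw [avg, vol_ball x hδ, inv_mul_le_iff₀ (by positivity)] at this
    linarith
  have key : ENNReal.ofReal (δ ^ hdim n * vol1 n) * ∫⁻ y in ball g r, F y
      ≤ ENNReal.ofReal (m * (δ ^ hdim n * vol1 n)) *
        ENNReal.ofReal ((2 * qK n * r) ^ hdim n * vol1 n) := by
    have hvol : ∀ (x : G n) (t : ℝ), 0 < t →
        volume (ball x t) = ENNReal.ofReal (t ^ hdim n * vol1 n) := fun x t ht => by
      rw [← vol_ball x ht, ENNReal.ofReal_toReal (volume_ball_lt_top _ _).ne]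
    calc ENNReal.ofReal (δ ^ hdim n * vol1 n) * ∫⁻ y in ball g r, F y
        = ∫⁻ y in ball g r, ENNReal.ofReal (δ ^ hdim n * vol1 n) * F y :=
          (lintegral_const_mul' _ _ ENNReal.ofReal_ne_top).symm
      _ = ∫⁻ y in ball g r, ∫⁻ x in ball g (2 * qK n * r),
            T.indicator (fun p => F p.2) (x, y) := by
          refine setLIntegral_congr_fun (measurableSet_ball' g r) fun y hy => ?_
          have e1 : (fun x => T.indicator (fun p => F p.2) (x, y))
              = (ball y δ).indicator (fun _ => F y) := by
            ext x
            by_cases hx : x ∈ ball y δ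
            · have hx' : (x, y) ∈ T := mem_ball_comm.1 hx
              rw [Set.indicator_of_mem hx, Set.indicator_of_mem hx']
            · have hx' : (x, y) ∉ T := fun h' => hx (mem_ball_comm.2 h')
              rw [Set.indicator_of_notMem hx, Set.indicator_of_notMem hx']
          have hsub : ball y δ ⊆ ball g (2 * qK n * r) :=
            ball_subset_ball (mem_ball'.1 hy) (by nlinarith)
          simp only [e1]
          rw [lintegral_indicator (measurableSet_ball' _ _), setLIntegral_const,
            Measure.restrict_apply (measurableSet_ball' _ _),
            Set.inter_eq_left.2 hsub, hvol y δ hδ, mul_comm]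
      _ = ∫⁻ x in ball g (2 * qK n * r), ∫⁻ y in ball g r,
            T.indicator (fun p => F p.2) (x, y) := by
          refine (lintegral_lintegral_swap ?_).symm
          have : AEMeasurable F (volume.restrict (ball g r)) := hF.restrict
          exact (this.comp_snd).indicator hT
      _ ≤ ∫⁻ x in ball g (2 * qK n * r), ENNReal.ofReal (m * (δ ^ hdim n * vol1 n)) := by
          refine lintegral_mono fun x => ?_
          have e1 : (fun y => T.indicator (fun p => F p.2) (x, y)) = (ball x δ).indicator F := by
            ext y
            by_cases hy : y ∈ ball x δ
            · have hy' : (x, y) ∈ T := hy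
              rw [Set.indicator_of_mem hy, Set.indicator_of_mem hy']
            · have hy' : (x, y) ∉ T := hy
              rw [Set.indicator_of_notMem hy, Set.indicator_of_notMem hy']
          simp only [e1]
          refine (setLIntegral_le_lintegral _ _).trans ?_
          rw [lintegral_indicator (measurableSet_ball' _ _)]
          exact hsmall x
      _ = _ := by rw [setLIntegral_const, hvol g _ hs]
  rw [hint g r hr, ← ENNReal.ofReal_mul (by positivity), ← ENNReal.ofReal_mul (by positivity),
    ENNReal.ofReal_le_ofReal_iff (by positivity)] at key
  rw [avg, vol_ball g hr, inv_mul_le_iff₀ (by positivity)]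
  have h2 : 0 < δ ^ hdim n * vol1 n := by positivity
  refine le_of_mul_le_mul_left (key.trans_eq ?_) h2
  rw [mul_pow (2 * qK n) r]
  ring

/-- A locally integrable function whose mean oscillation at small scales is at most `ε` lies
within a multiple of `ε`, in BMO, of a continuous function. -/
lemma exists_continuous_approx (n : ℕ) : ∃ C : ℝ, 0 < C ∧ ∀ (f : G n → ℝ), IsLocInt f →
    ∀ a ε : ℝ, 0 < a → 0 ≤ ε → (∀ (g : G n) (r : ℝ), 0 < r → r < a → oscB f g r ≤ ε) →
    ∃ f₁ : G n → ℝ, Continuous f₁ ∧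
      ∀ (g : G n) (r : ℝ), 0 < r → oscB (fun x => f x - f₁ x) g r ≤ C * ε := by
  have hK := one_le_qK n
  set A : ℝ := 2 * (4 * qK n) ^ hdim n with hA
  set D : ℝ := (2 * qK n) ^ hdim n with hD
  have hA0 : 0 < A := by positivity
  have hD0 : 0 < D := by positivity
  refine ⟨(1 + 2 * A) + 2 * (D * (D + A)), by positivity, fun f hf a ε ha hε H => ?_⟩
  set δ : ℝ := a / (4 * qK n) with hδ'
  have hδ : 0 < δ := by positivity
  have hs : 0 < 2 * qK n * δ := by positivity
  have hsa : 2 * qK n * δ < a := by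
    have : 2 * qK n * δ = a / 2 := by rw [hδ']; field_simp; norm_num
    linarith
  have hδs : δ ≤ 2 * qK n * δ := by nlinarith
  have hc1 := continuous_smear hδ hf
  have hL1 := isLocInt_of_continuous hc1
  have hLs := hf.sub hL1
  have hclose : ∀ g x : G n, x ∈ ball g δ →
      |smear δ f x - avg (ball g (2 * qK n * δ)) f| ≤ A * ε := fun g x hx =>
    (abs_smear_sub_le hδ hf _ hx).trans (by
      have : avg (ball g (2 * qK n * δ)) (fun y => |f y - avg (ball g (2 * qK n * δ)) f|) ≤ ε :=
        H g _ hs hsa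
      gcongr)
  have hsmall : ∀ g : G n, avg (ball g δ) (fun y => |f y - smear δ f y|) ≤ (D + A) * ε := by
    intro g
    set c := avg (ball g (2 * qK n * δ)) f
    have h1 : avg (ball g δ) (fun y => |f y - c|) ≤ D * ε := by
      have h2 : avg (ball g (2 * qK n * δ)) (fun y => |f y - c|) ≤ ε := H g _ hs hsa
      have hv := vol1_pos n
      rw [avg, vol_ball g hs, inv_mul_le_iff₀ (by positivity), mul_pow (2 * qK n)] at h2
      rw [avg, vol_ball g hδ, inv_mul_le_iff₀ (by positivity)]
      refine (setIntegral_mono_set (integrableOn_abs_sub (hf g _ hs) c)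
        (ae_of_all _ fun _ => abs_nonneg _) (ball_mono hδs).eventuallyLE).trans (h2.trans_eq ?_)
      ring
    have h3 := integrableOn_abs_sub (hf g δ hδ) c
    calc avg (ball g δ) (fun y => |f y - smear δ f y|)
        ≤ avg (ball g δ) (fun y => |f y - c| + A * ε) := by
          refine avg_mono (hLs g δ hδ).abs (h3.add (integrableOn_const' _ _ _)) fun y hy => ?_
          have := hclose g y hy
          rw [abs_sub_comm] at this
          exact (abs_sub_le _ c _).trans (by linarith)
      _ = avg (ball g δ) (fun y => |f y - c|) + A * ε := by
          rw [avg_add h3 (integrableOn_const' _ _ _), avg_const hδ]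
      _ ≤ _ := by linarith
  refine ⟨smear δ f, hc1, fun g r hr => ?_⟩
  have hp1 : 0 ≤ A * ε := by positivity
  have hp2 : 0 ≤ D * (D + A) * ε := by positivity
  -- On balls of radius at most `δ` both functions oscillate little; on larger ones `f - smear δ f`
  -- is small in absolute average.
  rcases le_or_gt r δ with hrδ | hrδ
  · have h1 := H g r hr (by linarith)
    have h2 := oscB_le_of_le hr (hL1 g r hr) _ _ fun x hx => hclose g x (ball_mono hrδ hx)
    have h3 := oscB_sub_le (hf g r hr) (hL1 g r hr)
    nlinarith
  · have h1 := oscB_le_two_mul hr (hLs g r hr) 0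
    simp only [sub_zero] at h1
    have h2 := avg_le_of_small hLs hδ hrδ.le (by positivity) hsmall g
    nlinarith

end QHeis

namespace QHeis

variable {n : ℕ}

/-! ### Cutoff functions with small mean oscillation -/

/-- The function `log ‖x‖`, truncated from below at `0`. -/
def logn (x : G n) : ℝ := Real.log (max (hnorm x) 1)

lemma continuous_logn : Continuous (logn : G n → ℝ) :=
  (continuous_hnorm.max continuous_const).log fun x => by positivity

/-- On a ball centred at the origin, `logn` differs from its supremum by at most `1` on average;
the sets where the difference exceeds `t` lie in balls whose radius decays like `exp (-t)`. -/
lemma avg_logn_zero {ρ : ℝ} (hρ : 0 < ρ) :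
    avg (ball (0 : G n) ρ) (fun x => |logn x - Real.log (max ρ 1)|) ≤ 1 := by
  have hv := vol1_pos n
  set c := Real.log (max ρ 1) with hc
  have hcont : Continuous fun x : G n => |logn x - c| :=
    (continuous_logn.sub continuous_const).abs
  have hint : IntegrableOn (fun x : G n => |logn x - c|) (ball 0 ρ) :=
    isLocInt_of_continuous hcont 0 ρ hρ
  have hlev : ∀ t ∈ Set.Ioi (0:ℝ),
      (volume.restrict (ball (0 : G n) ρ)) {x | t < |logn x - c|}
        ≤ ENNReal.ofReal (ρ ^ hdim n * vol1 n) * ENNReal.ofReal (Real.exp (-t)) := by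
    intro t ht
    have ht0 : 0 < t := ht
    have hle : Real.exp (-t) ≤ 1 := Real.exp_le_one_iff.2 (by linarith)
    have hpos := Real.exp_pos (-t)
    have hsub : {x : G n | t < |logn x - c|} ∩ ball 0 ρ ⊆ ball 0 (ρ * Real.exp (-t)) := by
      rintro x ⟨hx, hxρ⟩
      have hx' : t < |logn x - c| := hx
      rw [mem_ball_zero] at hxρ ⊢
      have hmono : logn x ≤ c :=
        Real.log_le_log (by positivity) (max_le_max hxρ.le le_rfl)
      rw [abs_of_nonpos (by linarith)] at hx'
      have h1 : logn x + t < c := by linarith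
      have h2 : max (hnorm x) 1 * Real.exp t < max ρ 1 := by
        have := Real.exp_lt_exp.2 h1
        rwa [Real.exp_add, logn, hc, Real.exp_log (by positivity),
          Real.exp_log (by positivity)] at this
      have h3 : 1 < Real.exp t := Real.one_lt_exp_iff.2 ht0
      have h4 : 1 < max ρ 1 := by
        have : 1 ≤ max (hnorm x) 1 := le_max_right _ _
        nlinarith
      have h5 : max ρ 1 = ρ := by
        rcases lt_max_iff.1 h4 with h | h
        · exact max_eq_left h.le
        · exact absurd h (lt_irrefl _)
      rw [h5] at h2
      rw [Real.exp_neg, ← div_eq_mul_inv, lt_div_iff₀ (Real.exp_pos t)]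
      exact lt_of_le_of_lt (by gcongr; exact le_max_left _ _) h2
    rw [Measure.restrict_apply (measurableSet_lt measurable_const hcont.measurable)]
    refine (measure_mono hsub).trans ?_
    have hr : 0 < ρ * Real.exp (-t) := by positivity
    rw [← ENNReal.ofReal_toReal (volume_ball_lt_top (0 : G n) _).ne, vol_ball _ hr,
      ← ENNReal.ofReal_mul (by positivity)]
    refine ENNReal.ofReal_le_ofReal ?_
    have h6 : Real.exp (-t) ^ hdim n ≤ Real.exp (-t) :=
      pow_le_of_le_one hpos.le hle (by simp [hdim])
    rw [mul_pow]
    calc ρ ^ hdim n * Real.exp (-t) ^ hdim n * vol1 n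
        ≤ ρ ^ hdim n * Real.exp (-t) * vol1 n := by gcongr
      _ = _ := by ring
  have hexp : ∫⁻ t in Set.Ioi (0:ℝ), ENNReal.ofReal (Real.exp (-t)) = 1 := by
    rw [← ofReal_integral_eq_lintegral_ofReal (integrableOn_exp_neg_Ioi 0)
      (ae_of_all _ fun t => (Real.exp_pos _).le), integral_exp_neg_Ioi_zero, ENNReal.ofReal_one]
  have hmain : ENNReal.ofReal (∫ x in ball (0 : G n) ρ, |logn x - c|)
      ≤ ENNReal.ofReal (ρ ^ hdim n * vol1 n) := by
    rw [ofReal_integral_eq_lintegral_ofReal hint (ae_of_all _ fun _ => abs_nonneg _),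
      lintegral_eq_lintegral_meas_lt _ (ae_of_all _ fun _ => abs_nonneg _)
        hcont.measurable.aemeasurable]
    refine (setLIntegral_mono' measurableSet_Ioi hlev).trans ?_
    rw [lintegral_const_mul' _ _ ENNReal.ofReal_ne_top, hexp, mul_one]
  rw [ENNReal.ofReal_le_ofReal_iff (by positivity)] at hmain
  rw [avg, vol_ball _ hρ, inv_mul_le_iff₀ (by positivity), mul_one]
  exact hmain

lemma isLocInt_sub {f h : G n → ℝ} (hf : Continuous f) (hh : Continuous h) :
    IsLocInt (fun x => f x - h x) := isLocInt_of_continuous (hf.sub hh)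

lemma isLocInt_abs_sub {f : G n → ℝ} (hf : Continuous f) (c : ℝ) :
    IsLocInt (fun x => |f x - c|) := isLocInt_of_continuous (hf.sub continuous_const).abs

lemma abs_max_sub_max_le (c s t : ℝ) : |max c s - max c t| ≤ |s - t| := by
  simpa using abs_max_sub_max_le_max c s c t

lemma abs_min_sub_min_le (c s t : ℝ) : |min c s - min c t| ≤ |s - t| := by
  simpa using abs_min_sub_min_le_max c s c t

lemma hnorm_le_rho (x y : G n) : hnorm x ≤ qK n * (rho x y + hnorm y) := by
  rw [← rho_zero x, ← rho_zero y]; exact rho_triangle _ _ _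

/-- `logn` belongs to BMO: it is nearly constant on balls far from the origin relative to their
radius, and any other ball sits inside a comparable ball centred at the origin. -/
lemma avg_logn_le (n : ℕ) : ∃ C : ℝ, 0 < C ∧ ∀ (g : G n) (r : ℝ), 0 < r →
    ∃ c, avg (ball g r) (fun x => |logn x - c|) ≤ C := by
  have hK := one_le_qK n
  have hlog : 0 ≤ Real.log (2 * qK n) := Real.log_nonneg (by linarith)
  refine ⟨Real.log (2 * qK n) + (3 * qK n ^ 2) ^ hdim n, by positivity, fun g r hr => ?_⟩
  have hpos : 0 < (3 * qK n ^ 2) ^ hdim n := by positivity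
  rcases le_or_gt (2 * qK n * r) (hnorm g) with hg | hg
  · refine ⟨logn g, ?_⟩
    have hcmp : ∀ a b : ℝ, a ≤ 2 * qK n * b →
        Real.log (max a 1) - Real.log (max b 1) ≤ Real.log (2 * qK n) := by
      intro a b hab
      have hb1 : 1 ≤ max b 1 := le_max_right _ _
      rw [sub_le_iff_le_add, ← Real.log_mul (by positivity) (by positivity)]
      refine Real.log_le_log (by positivity) (max_le ?_ (by nlinarith))
      exact hab.trans (by gcongr; exact le_max_left _ _)
    have hdist : ∀ x ∈ ball g r, |logn x - logn g| ≤ Real.log (2 * qK n) := by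
      intro x hx
      have hx' := mem_ball'.1 hx
      have h1 := hnorm_le_rho x g
      have h2 := hnorm_le_rho g x
      rw [rho_comm g x] at h2
      have h3 := hnorm_nonneg g
      have h4 := rho_nonneg x g
      have h5 : qK n * rho x g ≤ qK n * r := by gcongr
      refine abs_sub_le_iff.2 ⟨hcmp _ _ ?_, hcmp _ _ ?_⟩ <;> nlinarith
    have := avg_mono (g := g) (r := r)
      (isLocInt_abs_sub continuous_logn (logn g) g r hr) (integrableOn_const' g r _) hdist
    rw [avg_const hr] at this
    linarith
  · set ρ := 3 * qK n ^ 2 * r with hρ'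
    have hρ : 0 < ρ := by positivity
    have hv := vol1_pos n
    refine ⟨Real.log (max ρ 1), ?_⟩
    have hsub : ball g r ⊆ ball 0 ρ := by
      refine ball_subset_ball (s := 2 * qK n * r) (by rwa [rho_zero]) ?_
      have : 0 ≤ qK n * (qK n - 1) * r := by
        have : 0 ≤ qK n - 1 := by linarith
        positivity
      nlinarith
    have h := avg_logn_zero (n := n) hρ
    have hcont : Continuous fun x : G n => |logn x - Real.log (max ρ 1)| :=
      (continuous_logn.sub continuous_const).abs
    have hle : avg (ball g r) (fun x => |logn x - Real.log (max ρ 1)|)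
        ≤ (3 * qK n ^ 2) ^ hdim n := by
      rw [avg, vol_ball _ hρ, inv_mul_le_iff₀ (by positivity), mul_one] at h
      rw [avg, vol_ball _ hr, inv_mul_le_iff₀ (by positivity)]
      refine (setIntegral_mono_set (isLocInt_of_continuous hcont 0 ρ hρ)
        (ae_of_all _ fun _ => abs_nonneg _) hsub.eventuallyLE).trans (h.trans_eq ?_)
      rw [hρ', mul_pow _ r]; ring
    linarith

/-- Compactly supported cutoffs, equal to `1` on a given ball, with arbitrarily small BMO
seminorm: they interpolate between `1` and `0` linearly in `log ‖x‖`. -/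
lemma exists_cutoff {R η : ℝ} (hη : 0 < η) : ∃ χ : G n → ℝ, Continuous χ ∧
    HasCompactSupport χ ∧ (∀ x, 0 ≤ χ x) ∧ (∀ x, χ x ≤ 1) ∧ (∀ x, hnorm x ≤ R → χ x = 1) ∧
    ∀ (g : G n) (r : ℝ), 0 < r → oscB χ g r ≤ η := by
  obtain ⟨C, hC, H⟩ := avg_logn_le n
  set L : ℝ := max (max (2 * C / η) (Real.log (max R 1))) 1 with hL
  have hL1 : 1 ≤ L := le_max_right _ _
  have hLR : Real.log (max R 1) ≤ L := (le_max_right _ _).trans (le_max_left _ _)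
  have hLC : 2 * C / η ≤ L := (le_max_left _ _).trans (le_max_left _ _)
  have hL0 : 0 < L := by linarith
  set T : ℝ → ℝ := fun s => max 0 (min 1 (2 - s / L)) with hT
  have hTlip : ∀ s t, |T s - T t| ≤ L⁻¹ * |s - t| := by
    intro s t
    calc |T s - T t| ≤ |min 1 (2 - s / L) - min 1 (2 - t / L)| := abs_max_sub_max_le _ _ _
      _ ≤ |(2 - s / L) - (2 - t / L)| := abs_min_sub_min_le _ _ _
      _ = L⁻¹ * |s - t| := by
        rw [show (2 - s / L) - (2 - t / L) = - (L⁻¹ * (s - t)) by field_simp; ring, abs_neg,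
          abs_mul, abs_of_pos (inv_pos.2 hL0)]
  have hTc : Continuous T := by fun_prop
  have hc : Continuous fun x : G n => T (logn x) := hTc.comp continuous_logn
  refine ⟨fun x => T (logn x), hc, ?_, fun x => le_max_left _ _,
    fun x => max_le zero_le_one (min_le_left _ _), fun x hx => ?_, fun g r hr => ?_⟩
  · refine HasCompactSupport.intro (isCompact_cball (n := n) (Real.exp (2 * L))) fun x hx => ?_
    have hx' : Real.exp (2 * L) < hnorm x := not_le.1 hx
    have h1 : 2 * L ≤ logn x := by
      rw [logn, Real.le_log_iff_exp_le (by positivity)]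
      exact hx'.le.trans (le_max_left _ _)
    refine max_eq_left ((min_le_right _ _).trans ?_)
    have : 2 ≤ logn x / L := (le_div_iff₀ hL0).2 h1
    linarith
  · have h1 : logn x ≤ L :=
      (Real.log_le_log (by positivity) (max_le_max hx le_rfl)).trans hLR
    have h2 : logn x / L ≤ 1 := (div_le_one hL0).2 h1
    change max 0 (min 1 (2 - logn x / L)) = 1
    rw [min_eq_left (by linarith), max_eq_right zero_le_one]
  · obtain ⟨c, hcC⟩ := H g r hr
    have h1 := oscB_le_two_mul hr (isLocInt_of_continuous hc g r hr) (T c)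
    have h2 : avg (ball g r) (fun x => |T (logn x) - T c|)
        ≤ avg (ball g r) (fun x => L⁻¹ * |logn x - c|) :=
      avg_mono (isLocInt_abs_sub hc (T c) g r hr)
        (isLocInt_of_continuous
          (continuous_const.mul (continuous_logn.sub continuous_const).abs) g r hr)
        fun x _ => hTlip _ _
    rw [avg_const_mul] at h2
    have h3 : L⁻¹ * avg (ball g r) (fun x => |logn x - c|) ≤ L⁻¹ * C := by gcongr
    have h4 : 2 * (L⁻¹ * C) ≤ η := by
      rw [div_le_iff₀ hη] at hLC
      rw [← mul_assoc, mul_comm 2, mul_assoc, inv_mul_le_iff₀ hL0]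
      exact hLC
    linarith

/-- Mean oscillation of `(1 - χ) w`, from the identity
`(1 - χ) w - (1 - b) a = (1 - χ) (w - a) - a (χ - b)` with `a`, `b` the averages of `w`, `χ`. -/
lemma oscB_cutoff_mul {χ w : G n → ℝ} (hχ : Continuous χ) (hw : Continuous w)
    (h0 : ∀ x, 0 ≤ χ x) (h1 : ∀ x, χ x ≤ 1) {N : ℝ} (hN : ∀ x, |w x| ≤ N) (g : G n) {r : ℝ}
    (hr : 0 < r) : oscB (fun x => w x - χ x * w x) g r ≤ 2 * (oscB w g r + N * oscB χ g r) := by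
  set a := avg (ball g r) w
  set b := avg (ball g r) χ
  have ha : |a| ≤ N := by
    refine abs_avg_le.trans ((avg_mono (isLocInt_of_continuous hw.abs g r hr)
      (integrableOn_const' g r N) fun x _ => hN x).trans_eq (avg_const hr N))
  have hcw : Continuous fun x => w x - χ x * w x := by fun_prop
  refine (oscB_le_two_mul hr (isLocInt_of_continuous hcw g r hr) ((1 - b) * a)).trans ?_
  have hi1 := isLocInt_abs_sub hw a g r hr
  have hi2 := isLocInt_abs_sub hχ b g r hr
  have hi3 : IntegrableOn (fun x => N * |χ x - b|) (ball g r) := Integrable.const_mul hi2 N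
  have h2 : avg (ball g r) (fun x => |w x - χ x * w x - (1 - b) * a|)
      ≤ avg (ball g r) (fun x => |w x - a| + N * |χ x - b|) := by
    refine avg_mono (isLocInt_abs_sub hcw _ g r hr) (Integrable.add hi1 hi3)
      fun x _ => ?_
    have e : w x - χ x * w x - (1 - b) * a = (1 - χ x) * (w x - a) - a * (χ x - b) := by ring
    rw [e]
    refine (abs_sub _ _).trans ?_
    rw [abs_mul, abs_mul, abs_of_nonneg (by linarith [h1 x] : 0 ≤ 1 - χ x)]
    have := mul_le_of_le_one_left (abs_nonneg (w x - a)) (by linarith [h0 x] : 1 - χ x ≤ 1)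
    gcongr
  rw [avg_add hi1 hi3, avg_const_mul] at h2
  unfold oscB
  linarith

/-! ### Sufficiency of the three conditions -/

lemma sufficiency {f : G n → ℝ} (hf : InBMO f)
    (h1 : ∀ ε : ℝ, 0 < ε → ∃ a₀ : ℝ, 0 < a₀ ∧
          ∀ (g : G n) (r : ℝ), 0 < r → r < a₀ → oscB f g r < ε)
    (h2 : ∀ ε : ℝ, 0 < ε → ∃ a₀ : ℝ, 0 < a₀ ∧
          ∀ (g : G n) (r : ℝ), a₀ < r → oscB f g r < ε)
    (h3 : ∀ ε : ℝ, 0 < ε → ∃ R : ℝ, 0 < R ∧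
          ∀ (g : G n) (r : ℝ), 0 < r → ball g r ⊆ (ball (0 : G n) R)ᶜ →
            oscB f g r < ε) : InVMO f := by
  refine ⟨hf, fun ε hε => ?_⟩
  have hK := one_le_qK n
  obtain ⟨C, hC, happ⟩ := exists_continuous_approx n
  -- The four approximation errors below add up to at most `(7C + 10)e`.
  set e : ℝ := ε / (2 * (7 * C + 10)) with he'
  have he : 0 < e := by positivity
  have hee : (7 * C + 10) * e = ε / 2 := by rw [he']; field_simp
  obtain ⟨a, ha, ha'⟩ := h1 e he
  obtain ⟨A, hA, hA'⟩ := h2 e he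
  obtain ⟨R, hR, hR'⟩ := h3 e he
  obtain ⟨f₁, hc₁, hf₁⟩ := happ f hf.1 a e ha he.le fun g r hr hra => (ha' g r hr hra).le
  have hL₁ := isLocInt_of_continuous hc₁
  have hosc₁ : ∀ (g : G n) (r : ℝ), 0 < r → oscB f₁ g r ≤ oscB f g r + C * e := by
    intro g r hr
    have := oscB_sub_le (hf.1 g r hr) ((hf.1.sub hL₁) g r hr)
    rw [oscB_congr (h := f₁) fun x _ => sub_sub_cancel (f x) (f₁ x)] at this
    linarith [hf₁ g r hr]
  -- A ball on which `f` oscillates noticeably lies in a fixed ball about the origin.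
  set R₁ : ℝ := qK n * (qK n * (A + A) + R)
  have hdich : ∀ (g : G n) (r : ℝ), 0 < r →
      oscB f g r < e ∨ ∀ x ∈ ball g r, hnorm x ≤ R₁ := by
    intro g r hr
    by_cases hrA : A < r
    · exact Or.inl (hA' g r hrA)
    by_cases hsub : ball g r ⊆ (ball (0 : G n) R)ᶜ
    · exact Or.inl (hR' g r hr hsub)
    obtain ⟨x, hx, hx0⟩ := Set.not_subset.1 hsub
    rw [Set.mem_compl_iff, not_not, mem_ball_zero] at hx0
    refine Or.inr fun y hy => (hnorm_le_rho y x).trans ?_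
    have h4 := rho_triangle y g x
    rw [rho_comm g x] at h4
    have h5 := mem_ball'.1 hx
    have h6 := mem_ball'.1 hy
    have h7 : rho y x ≤ qK n * (A + A) := 
      h4.trans (mul_le_mul_of_nonneg_left (by linarith) (by linarith))
    exact mul_le_mul_of_nonneg_left (by linarith) (by linarith)
  -- Truncation `T` at height `N` leaves `f₁` unchanged on that fixed ball.
  obtain ⟨N₀, hN₀⟩ := (isCompact_cball (n := n) R₁).exists_bound_of_continuousOn hc₁.continuousOn
  set N : ℝ := max N₀ 1
  have hN : 0 < N := by positivity
  have hN1 : ∀ x, hnorm x ≤ R₁ → |f₁ x| ≤ N := fun x hx => (hN₀ x hx).trans (le_max_left _ _)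
  set T : ℝ → ℝ := fun s => max (-N) (min N s) with hT
  have hTlip : ∀ s t, |T s - T t| ≤ |s - t| := fun s t =>
    (abs_max_sub_max_le _ _ _).trans (abs_min_sub_min_le _ _ _)
  have hTid : ∀ s, |s| ≤ N → T s = s := fun s hs => by
    have := abs_le.1 hs
    simp only [hT]; rw [min_eq_right this.2, max_eq_right this.1]
  have hTbd : ∀ s, |T s| ≤ N := fun s => abs_le.2
    ⟨le_max_left _ _, max_le (by linarith) (min_le_left _ _)⟩
  have hT'lip : ∀ s t, |(s - T s) - (t - T t)| ≤ |s - t| := by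
    -- both `T` and `id - T` are nondecreasing
    have hmono : ∀ s t, s ≤ t → T s ≤ T t ∧ s - T s ≤ t - T t := by
      intro s t hst
      refine ⟨max_le_max le_rfl (min_le_min le_rfl hst), ?_⟩
      simp only [hT]
      rcases max_cases (-N) (min N s) with h | h <;> rcases max_cases (-N) (min N t) with h' | h' <;>
        rcases min_cases N s with k | k <;> rcases min_cases N t with k' | k' <;> linarith
    intro s t
    rcases le_total s t with hst | hst
    · obtain ⟨p, q⟩ := hmono s t hst
      rw [abs_of_nonpos (by linarith), abs_of_nonpos (by linarith)]; linarith
    · obtain ⟨p, q⟩ := hmono t s hst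
      rw [abs_of_nonneg (by linarith), abs_of_nonneg (by linarith)]; linarith
  have hTc : Continuous T := by fun_prop
  set f₂ : G n → ℝ := fun x => T (f₁ x) with hf₂
  have hc₂ : Continuous f₂ := hTc.comp hc₁
  obtain ⟨χ, hχ, hχs, hχ0, hχ1, hχR, hχo⟩ := exists_cutoff (n := n) (R := R₁) (div_pos he hN)
  set f₃ : G n → ℝ := fun x => χ x * f₂ x with hf₃
  have hc₃ : Continuous f₃ := hχ.mul hc₂
  have hs₃ : HasCompactSupport f₃ := hχs.mul_right
  obtain ⟨φ, hφ, hφd, hφs⟩ := hc₃.exists_contDiff_approx ⊤ (ε := fun _ => e) continuous_const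
    fun _ => he
  have hcφ := hφ.continuous
  have hLφ := isLocInt_of_continuous hcφ
  have hb12 : ∀ (g : G n) (r : ℝ), 0 < r →
      oscB (fun x => f₁ x - f₂ x) g r ≤ 2 * ((1 + C) * e) := by
    intro g r hr
    rcases hdich g r hr with h | h
    · have := oscB_lip_comp hr (hL₁ g r hr) (isLocInt_sub hc₁ hc₂ g r hr)
        (fun s => s - T s) hT'lip fun x => rfl
      linarith [hosc₁ g r hr]
    · rw [oscB_zero fun x hx => by simp only [hf₂]; rw [hTid _ (hN1 x (h x hx)), sub_self]]
      positivity
  have hb23 : ∀ (g : G n) (r : ℝ), 0 < r →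
      oscB (fun x => f₂ x - f₃ x) g r ≤ 2 * (2 * ((1 + C) * e) + e) := by
    intro g r hr
    rcases hdich g r hr with h | h
    · have k1 := oscB_cutoff_mul hχ hc₂ hχ0 hχ1 (fun x => hTbd (f₁ x)) g hr
      have k2 := oscB_lip_comp hr (hL₁ g r hr) (isLocInt_of_continuous hc₂ g r hr)
        T hTlip fun x => rfl
      have k3 : N * oscB χ g r ≤ e := by
        have := hχo g r hr
        rwa [le_div_iff₀ hN, mul_comm] at this
      linarith [hosc₁ g r hr]
    · rw [oscB_zero fun x hx => by simp only [hf₃]; rw [hχR x (h x hx), one_mul, sub_self]]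
      positivity
  have hb3 : ∀ (g : G n) (r : ℝ), 0 < r → oscB (fun x => f₃ x - φ x) g r ≤ 2 * e := by
    intro g r hr
    refine oscB_le_of_le hr (isLocInt_sub hc₃ hcφ g r hr) 0 e fun x _ => ?_
    rw [sub_zero, abs_sub_comm]
    exact (hφd x).le
  -- Telescope `f - φ = (f - f₁) + (f₁ - f₂) + (f₂ - f₃) + (f₃ - φ)`.
  have hfin : ∀ (g : G n) (r : ℝ), 0 < r → oscB (fun x => f x - φ x) g r ≤ ε / 2 := by
    intro g r hr
    have i1 := (hf.1.sub hL₁) g r hr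
    have i2 := isLocInt_sub hc₁ hc₂ g r hr
    have i3 := isLocInt_sub hc₂ hc₃ g r hr
    have i4 := isLocInt_sub hc₃ hcφ g r hr
    have i34 := isLocInt_sub hc₂ hcφ g r hr
    have i234 := isLocInt_sub hc₁ hcφ g r hr
    have j34 := oscB_add_le i3 i4
    have j234 := oscB_add_le i2 i34
    have j := oscB_add_le i1 i234
    simp only [sub_add_sub_cancel] at j j234 j34
    linarith [hf₁ g r hr, hb12 g r hr, hb23 g r hr, hb3 g r hr]
  refine ⟨φ, hφ, hs₃.mono hφs, ⟨hf.1.sub hLφ, _, hfin⟩, ?_⟩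
  exact (bmoNorm_le (by positivity) hfin).trans_lt (half_lt_self hε)

end QHeis

open QHeis MeasureTheory in
/-- characterization of VMO: for `f ∈ BMO(𝓗^{n-1})`, `f ∈ VMO(𝓗^{n-1})`
iff (i) `lim_{a→0} sup_{r_B = a} M(f;B) = 0`, (ii) `lim_{a→∞} sup_{r_B = a} M(f;B) = 0`,
and (iii) `lim_{r→∞} sup_{B ⊆ 𝓗^{n-1}∖B(0,r)} M(f;B) = 0`. -/
theorem vmo_characterization (n : ℕ) (hn : 2 ≤ n) (f : G n → ℝ) (hf : InBMO f) :
    InVMO f ↔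
      ((∀ ε : ℝ, 0 < ε → ∃ a₀ : ℝ, 0 < a₀ ∧
          ∀ (g : G n) (r : ℝ), 0 < r → r < a₀ → oscB f g r < ε) ∧
       (∀ ε : ℝ, 0 < ε → ∃ a₀ : ℝ, 0 < a₀ ∧
          ∀ (g : G n) (r : ℝ), a₀ < r → oscB f g r < ε) ∧
       (∀ ε : ℝ, 0 < ε → ∃ R : ℝ, 0 < R ∧
          ∀ (g : G n) (r : ℝ), 0 < r → ball g r ⊆ (ball (0 : G n) R)ᶜ →
            oscB f g r < ε)) :=
  ⟨necessity, fun ⟨h1, h2, h3⟩ => sufficiency hf h1 h2 h3⟩
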